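/- The LMSR cost function dominates every coordinate, bounding the market maker's loss: for every q : Ω → ℝ and every ω ∈ Ω, C(q) ≥ q_ω; consequently, for any initial share vector q⁰ and any final share vector q, the market maker's net loss upon resolution to outcome ω satisfies (q_ω − q⁰_ω) − (C(q) − C(q⁰)) ≤ C(q⁰) + Σ_{τ∈Ω} max(0, −q⁰_τ). -/

import Mathlib

/- A cost function that dominates every coordinate of the share vector caps the loss: since
`q ω ≤ C q`, the final share vector drops out of the net loss, leaving `C q⁰ - q⁰ ω`. -/

theorem le_log_sum_exp {ι : Type*} {s : Finset ι} {i : ι} (f : ι → ℝ) (hi : i ∈ s) :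
    f i ≤ Real.log (∑ j ∈ s, Real.exp (f j)) := by
  have exp_le_sum : Real.exp (f i) ≤ ∑ j ∈ s, Real.exp (f j) :=
    Finset.single_le_sum (f := fun j ↦ Real.exp (f j)) (fun j _ ↦ (Real.exp_pos (f j)).le) hi
  exact (Real.le_log_iff_exp_le ((Real.exp_pos (f i)).trans_le exp_le_sum)).mpr exp_le_sum

theorem le_sum_zero_sup {ι M : Type*} [AddCommMonoid M] [SemilatticeSup M] [AddLeftMono M]
    {s : Finset ι} {i : ι} (f : ι → M) (hi : i ∈ s) : f i ≤ ∑ j ∈ s, 0 ⊔ f j :=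
  le_sup_right.trans <|
    Finset.single_le_sum (f := fun j ↦ 0 ⊔ f j) (fun _ _ ↦ le_sup_left) hi

section LMSR

variable {Ω : Type*} [Fintype Ω] {b : ℝ}

/-- The cost function `C` of the logarithmic market scoring rule with liquidity parameter `b`. It is
defined for every real `b` but meaningful only for `0 < b`; the junk value at `b = 0` is `0`. -/
noncomputable def lmsrCost (b : ℝ) (q : Ω → ℝ) : ℝ :=
  b * Real.log (∑ τ, Real.exp (q τ / b))

/-- The market maker's net loss when trading moves the share vector from `q0` to `q` and `ω` occurs:
the payout to traders minus the trading revenue. A negative value is a profit. -/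
noncomputable def lmsrNetLoss (b : ℝ) (q0 q : Ω → ℝ) (ω : Ω) : ℝ :=
  (q ω - q0 ω) - (lmsrCost b q - lmsrCost b q0)

theorem le_lmsrCost (hb : 0 < b) (q : Ω → ℝ) (ω : Ω) : q ω ≤ lmsrCost b q :=
  (div_le_iff₀' hb).mp <| le_log_sum_exp (fun τ ↦ q τ / b) (Finset.mem_univ ω)

theorem lmsrNetLoss_le_lmsrCost_sub (hb : 0 < b) (q0 q : Ω → ℝ) (ω : Ω) :
    lmsrNetLoss b q0 q ω ≤ lmsrCost b q0 - q0 ω := by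
  have coord_le_cost : q ω ≤ lmsrCost b q := le_lmsrCost hb q ω
  unfold lmsrNetLoss
  linarith

theorem lmsrNetLoss_le_lmsrCost_add_sum (hb : 0 < b) (q0 q : Ω → ℝ) (ω : Ω) :
    lmsrNetLoss b q0 q ω ≤ lmsrCost b q0 + ∑ τ, max 0 (-(q0 τ)) :=
  calc
    lmsrNetLoss b q0 q ω ≤ lmsrCost b q0 + -(q0 ω) := by
      simpa only [sub_eq_add_neg] using lmsrNetLoss_le_lmsrCost_sub hb q0 q ω
    _ ≤ lmsrCost b q0 + ∑ τ, max 0 (-(q0 τ)) := by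
      gcongr
      exact le_sum_zero_sup (fun τ ↦ -(q0 τ)) (Finset.mem_univ ω)

end LMSR

/-- The LMSR cost function `C(q) = b·log(∑ ω, exp(q ω / b))` dominates every
coordinate, bounding the market maker's loss: `C(q) ≥ q ω` for all `q` and `ω`;
consequently, for any initial share vector `q⁰` and final share vector `q`, the
market maker's net loss upon resolution to `ω`, namely
`(q ω − q⁰ ω) − (C q − C q⁰)`, is at most `C q⁰ + ∑ τ, max 0 (−(q⁰ τ))`. -/
theorem lmsr_cost_dominates_and_bounds_loss
    {Ω : Type*} [Fintype Ω] [Nonempty Ω]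
    (b : ℝ) (hb : 0 < b) (q0 q : Ω → ℝ) (ω : Ω) :
    b * Real.log (∑ τ : Ω, Real.exp (q τ / b)) ≥ q ω ∧
    (q ω - q0 ω)
        - (b * Real.log (∑ τ : Ω, Real.exp (q τ / b))
          - b * Real.log (∑ τ : Ω, Real.exp (q0 τ / b)))
      ≤ b * Real.log (∑ τ : Ω, Real.exp (q0 τ / b)) + ∑ τ : Ω, max 0 (-(q0 τ)) := by
  exact ⟨le_lmsrCost hb q ω, lmsrNetLoss_le_lmsrCost_add_sum hb q0 q ω⟩
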